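/- Let r ≤ min(p, q) and let U ∈ ℂ^{p×r}, V ∈ ℂ^{q×r} have orthonormal columns (UᴴU = I_r and VᴴV = I_r). The function G(Σ, x) := (1/2)‖s − 𝓟_Ω x‖₂² + (β/2)‖UΣVᴴ − 𝓗x‖_F² + (α/2)‖x‖₂² on ℂ^{r×r} × ℂⁿ has a unique global minimizer (Σ*, x†), and this minimizer is characterized by the equations x† = 𝓛(𝓟_Ω s + β𝓗*(UΣ*Vᴴ)) and Σ* − β Uᴴ(𝓗(𝓛(𝓗*(UΣ*Vᴴ))))V = Uᴴ(𝓗(𝓛(𝓟_Ω s)))V. -/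

import Mathlib

open scoped BigOperators

namespace LPPG

/-- The Hankel operator. -/
noncomputable def hankel (p q n : ℕ) (hn : p + q = n + 1) (x : Fin n → ℂ) :
    Matrix (Fin p) (Fin q) ℂ :=
  fun i j => x ⟨i.1 + j.1, by have hi := i.2; have hj := j.2; omega⟩

/-- The adjoint `𝓗*` of the Hankel operator. -/
noncomputable def hankelAdj (p q n : ℕ) (X : Matrix (Fin p) (Fin q) ℂ) : Fin n → ℂ :=
  fun a => ∑ i : Fin p, ∑ j : Fin q, if (i : ℕ) + (j : ℕ) = (a : ℕ) then X i j else 0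

/-- The antidiagonal count `w_a`. -/
def w (p q : ℕ) (a : ℕ) : ℕ :=
  (Finset.univ.filter (fun ij : Fin p × Fin q => (ij.1 : ℕ) + (ij.2 : ℕ) = a)).card

/-- The sampling operator `𝓟_Ω`. -/
def projOmega (n : ℕ) (Ω : Finset (Fin n)) (x : Fin n → ℂ) : Fin n → ℂ :=
  fun a => if a ∈ Ω then x a else 0

/-- The entrywise operator `𝓛`. -/
noncomputable def Lop (p q n : ℕ) (α β : ℝ) (Ω : Finset (Fin n)) (x : Fin n → ℂ) : Fin n → ℂ :=
  fun a => x a / ((α : ℂ) + (if a ∈ Ω then 1 else 0) + (β : ℂ) * (w p q (a : ℕ) : ℂ))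

/-- The objective `G(Σ, x) = (1/2)‖s − 𝓟_Ω x‖₂² + (β/2)‖UΣVᴴ − 𝓗x‖_F² + (α/2)‖x‖₂²`. -/
noncomputable def Gfun (p q n r : ℕ) (hn : p + q = n + 1) (α β : ℝ) (Ω : Finset (Fin n))
    (s : Fin n → ℂ) (U : Matrix (Fin p) (Fin r) ℂ) (V : Matrix (Fin q) (Fin r) ℂ)
    (S : Matrix (Fin r) (Fin r) ℂ) (x : Fin n → ℂ) : ℝ :=
  (1 / 2) * ∑ a : Fin n, ‖s a - projOmega n Ω x a‖ ^ 2
    + (β / 2) * ∑ i : Fin p, ∑ j : Fin q,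
        ‖(U * S * V.conjTranspose - hankel p q n hn x) i j‖ ^ 2
    + (α / 2) * ∑ a : Fin n, ‖x a‖ ^ 2

open Matrix

lemma hankel_add (p q n : ℕ) (hn : p + q = n + 1) (x y : Fin n → ℂ) :
    hankel p q n hn (x + y) = hankel p q n hn x + hankel p q n hn y := rfl

lemma hankel_smul (p q n : ℕ) (hn : p + q = n + 1) (c : ℂ) (y : Fin n → ℂ) :
    hankel p q n hn (c • y) = c • hankel p q n hn y := rfl

lemma hankelAdj_add (p q n : ℕ) (X Y : Matrix (Fin p) (Fin q) ℂ) :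
    hankelAdj p q n (X + Y) = hankelAdj p q n X + hankelAdj p q n Y := by
  ext a
  simp only [hankelAdj, Pi.add_apply, Matrix.add_apply, ← Finset.sum_add_distrib]
  refine Finset.sum_congr rfl fun i _ => Finset.sum_congr rfl fun j _ => ?_
  split_ifs <;> simp

lemma hankelAdj_smul (p q n : ℕ) (c : ℂ) (Y : Matrix (Fin p) (Fin q) ℂ) :
    hankelAdj p q n (c • Y) = c • hankelAdj p q n Y := by
  ext a
  simp only [hankelAdj, Pi.smul_apply, Matrix.smul_apply, smul_eq_mul, Finset.mul_sum]
  refine Finset.sum_congr rfl fun i _ => Finset.sum_congr rfl fun j _ => ?_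
  split_ifs <;> simp

lemma hankelAdj_sub (p q n : ℕ) (X Y : Matrix (Fin p) (Fin q) ℂ) :
    hankelAdj p q n (X - Y) = hankelAdj p q n X - hankelAdj p q n Y := by
  have h : X - Y = X + (-1 : ℂ) • Y := by simp [sub_eq_add_neg]
  rw [h, hankelAdj_add, hankelAdj_smul]
  simp [sub_eq_add_neg]

lemma hankelAdj_hankel (p q n : ℕ) (hn : p + q = n + 1) (x : Fin n → ℂ) (a : Fin n) :
    hankelAdj p q n (hankel p q n hn x) a = (w p q (a : ℕ) : ℂ) * x a := by
  have h : ∀ (i : Fin p) (j : Fin q),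
      (if (i : ℕ) + (j : ℕ) = (a : ℕ) then hankel p q n hn x i j else 0)
        = if (i : ℕ) + (j : ℕ) = (a : ℕ) then x a else 0 := by
    intro i j
    split_ifs with h
    · unfold hankel
      congr 1
      exact Fin.ext h
    · rfl
  simp only [hankelAdj, h]
  rw [← Fintype.sum_prod_type' (f := fun (i : Fin p) (j : Fin q) =>
    if (i : ℕ) + (j : ℕ) = (a : ℕ) then x a else 0)]
  rw [← Finset.sum_filter, Finset.sum_const, w, nsmul_eq_mul]

lemma hankel_adjoint (p q n : ℕ) (hn : p + q = n + 1) (M : Matrix (Fin p) (Fin q) ℂ)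
    (d : Fin n → ℂ) :
    ∑ i, ∑ j, star (M i j) * hankel p q n hn d i j = ∑ a, star (hankelAdj p q n M a) * d a := by
  simp only [hankelAdj, star_sum, Finset.sum_mul]
  rw [Finset.sum_comm (s := (Finset.univ : Finset (Fin n)))]
  refine Finset.sum_congr rfl fun i _ => ?_
  rw [Finset.sum_comm (s := (Finset.univ : Finset (Fin n)))]
  refine Finset.sum_congr rfl fun j _ => ?_
  have hi := i.2
  have hj := j.2
  rw [Finset.sum_eq_single (⟨i.1 + j.1, by omega⟩ : Fin n)]
  · simp [hankel]
  · intro b _ hb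
    rw [if_neg]
    · simp
    · intro h
      exact hb (Fin.ext h.symm)
  · simp

lemma trace_sum {p q : ℕ} (M N : Matrix (Fin p) (Fin q) ℂ) :
    ∑ i, ∑ j, star (M i j) * N i j = (Mᴴ * N).trace := by
  simp only [Matrix.trace, Matrix.diag_apply, Matrix.mul_apply, Matrix.conjTranspose_apply]
  rw [Finset.sum_comm]

lemma uv_orth {p q r : ℕ} (U : Matrix (Fin p) (Fin r) ℂ) (V : Matrix (Fin q) (Fin r) ℂ)
    (M : Matrix (Fin p) (Fin q) ℂ) (h : Uᴴ * M * V = 0) (D : Matrix (Fin r) (Fin r) ℂ) :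
    ∑ i, ∑ j, star (M i j) * (U * D * Vᴴ) i j = 0 := by
  rw [trace_sum, ← Matrix.mul_assoc, Matrix.trace_mul_comm]
  have h2 : Vᴴ * (Mᴴ * (U * D)) = (Uᴴ * M * V)ᴴ * D := by
    simp [Matrix.conjTranspose_mul, Matrix.mul_assoc]
  rw [h2, h]
  simp

lemma norm_add_sq_c (a b : ℂ) : ‖a + b‖ ^ 2 = ‖a‖ ^ 2 + 2 * (star a * b).re + ‖b‖ ^ 2 := by
  simp only [← Complex.normSq_eq_norm_sq, Complex.normSq_apply]
  simp
  ring

/-- Expansion at a stationary point. -/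
lemma expansion (p q n r : ℕ) (hn : p + q = n + 1)
    (α β : ℝ) (Ω : Finset (Fin n)) (s : Fin n → ℂ)
    (U : Matrix (Fin p) (Fin r) ℂ) (V : Matrix (Fin q) (Fin r) ℂ)
    (S : Matrix (Fin r) (Fin r) ℂ) (x : Fin n → ℂ)
    (h1 : Uᴴ * (U * S * Vᴴ - hankel p q n hn x) * V = 0)
    (h2 : ∀ a, projOmega n Ω x a - β * hankelAdj p q n (U * S * Vᴴ - hankel p q n hn x) a
      + α * x a = projOmega n Ω s a)
    (D : Matrix (Fin r) (Fin r) ℂ) (d : Fin n → ℂ) :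
    Gfun p q n r hn α β Ω s U V (S + D) (x + d)
      = Gfun p q n r hn α β Ω s U V S x + Gfun p q n r hn α β Ω 0 U V D d := by
  set M := U * S * Vᴴ - hankel p q n hn x with hM
  have e1 : ∀ a, s a - projOmega n Ω (x + d) a
      = (s a - projOmega n Ω x a) + ((0 : Fin n → ℂ) a - projOmega n Ω d a) := by
    intro a
    simp only [projOmega, Pi.add_apply, Pi.zero_apply]
    split_ifs <;> ring
  have e2 : U * (S + D) * Vᴴ - hankel p q n hn (x + d)
      = M + (U * D * Vᴴ - hankel p q n hn d) := by
    rw [hM, hankel_add, Matrix.mul_add, Matrix.add_mul]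
    abel
  have cross : (∑ a, star (s a - projOmega n Ω x a) * ((0 : Fin n → ℂ) a - projOmega n Ω d a))
      + β * (∑ i, ∑ j, star (M i j) * (U * D * Vᴴ - hankel p q n hn d) i j)
      + α * (∑ a, star (x a) * d a) = 0 := by
    have : ∑ i, ∑ j, star (M i j) * (U * D * Vᴴ - hankel p q n hn d) i j
        = - ∑ a, star (hankelAdj p q n M a) * d a := by
      simp only [Matrix.sub_apply, mul_sub, Finset.sum_sub_distrib]
      rw [uv_orth U V M h1 D, hankel_adjoint, zero_sub]
    rw [this, mul_neg, ← sub_eq_add_neg, Finset.mul_sum, Finset.mul_sum,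
      ← Finset.sum_sub_distrib, ← Finset.sum_add_distrib]
    refine Finset.sum_eq_zero fun a _ => ?_
    have h := congrArg star (h2 a)
    simp only [projOmega, Pi.zero_apply] at h ⊢
    split_ifs at h ⊢
    · simp only [star_add, star_sub, star_mul', Complex.star_def, Complex.conj_ofReal] at h ⊢
      linear_combination d a * h
    · simp only [star_add, star_sub, star_mul', Complex.star_def, Complex.conj_ofReal, map_zero] at h ⊢
      linear_combination d a * h
  have cr := congrArg Complex.re cross
  simp only [Complex.add_re, Complex.re_ofReal_mul, Complex.re_sum, Complex.zero_re] at cr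
  unfold Gfun
  rw [e2, ← hM]
  simp only [e1, Matrix.add_apply M, Pi.add_apply x, norm_add_sq_c, Finset.sum_add_distrib, ← Finset.mul_sum]
  linear_combination cr

lemma Gfun_zero_nonneg (p q n r : ℕ) (hn : p + q = n + 1)
    (α β : ℝ) (hα : 0 < α) (hβ : 0 < β) (Ω : Finset (Fin n))
    (s : Fin n → ℂ)
    (U : Matrix (Fin p) (Fin r) ℂ) (V : Matrix (Fin q) (Fin r) ℂ)
    (D : Matrix (Fin r) (Fin r) ℂ) (d : Fin n → ℂ) :
    0 ≤ Gfun p q n r hn α β Ω s U V D d := by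
  unfold Gfun
  positivity

lemma uv_cancel {p q r : ℕ} (U : Matrix (Fin p) (Fin r) ℂ) (V : Matrix (Fin q) (Fin r) ℂ)
    (hU : Uᴴ * U = 1) (hV : Vᴴ * V = 1) (S : Matrix (Fin r) (Fin r) ℂ) :
    Uᴴ * (U * S * Vᴴ) * V = S := by
  calc Uᴴ * (U * S * Vᴴ) * V = (Uᴴ * U) * S * (Vᴴ * V) := by simp only [Matrix.mul_assoc]
    _ = S := by rw [hU, hV]; simp

lemma Gfun_zero_eq (p q n r : ℕ) (hn : p + q = n + 1)
    (α β : ℝ) (hα : 0 < α) (hβ : 0 < β) (Ω : Finset (Fin n))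
    (U : Matrix (Fin p) (Fin r) ℂ) (V : Matrix (Fin q) (Fin r) ℂ)
    (hU : Uᴴ * U = 1) (hV : Vᴴ * V = 1)
    (D : Matrix (Fin r) (Fin r) ℂ) (d : Fin n → ℂ)
    (h : Gfun p q n r hn α β Ω 0 U V D d ≤ 0) : D = 0 ∧ d = 0 := by
  unfold Gfun at h
  have t1 : 0 ≤ (1 / 2 : ℝ) * ∑ a : Fin n, ‖(0 : Fin n → ℂ) a - projOmega n Ω d a‖ ^ 2 := by
    positivity
  have n2 : 0 ≤ ∑ i : Fin p, ∑ j : Fin q,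
        ‖(U * D * Vᴴ - hankel p q n hn d) i j‖ ^ 2 := by positivity
  have n3 : 0 ≤ ∑ a : Fin n, ‖d a‖ ^ 2 := by positivity
  have z3 : ∑ a : Fin n, ‖d a‖ ^ 2 = 0 := by
    have := mul_nonneg (half_pos hβ).le n2
    have h' : (α / 2) * ∑ a : Fin n, ‖d a‖ ^ 2 ≤ 0 := by linarith
    nlinarith [half_pos hα]
  have z2 : ∑ i : Fin p, ∑ j : Fin q,
        ‖(U * D * Vᴴ - hankel p q n hn d) i j‖ ^ 2 = 0 := by
    have := mul_nonneg (half_pos hα).le n3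
    have h' : (β / 2) * ∑ i : Fin p, ∑ j : Fin q,
        ‖(U * D * Vᴴ - hankel p q n hn d) i j‖ ^ 2 ≤ 0 := by linarith
    nlinarith [half_pos hβ]
  have hd : d = 0 := by
    ext a
    rw [Finset.sum_eq_zero_iff_of_nonneg (fun _ _ => by positivity)] at z3
    simpa using z3 a (Finset.mem_univ a)
  have hz : U * D * Vᴴ = 0 := by
    ext i j
    rw [Finset.sum_eq_zero_iff_of_nonneg (fun _ _ => by positivity)] at z2
    have := z2 i (Finset.mem_univ i)
    rw [Finset.sum_eq_zero_iff_of_nonneg (fun _ _ => by positivity)] at this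
    have := this j (Finset.mem_univ j)
    simpa [hd, hankel] using this
  refine ⟨?_, hd⟩
  rw [← uv_cancel U V hU hV D, hz]
  simp

/-- The linear part of the gradient. -/
noncomputable def gradMap (p q n r : ℕ) (hn : p + q = n + 1) (α β : ℝ) (Ω : Finset (Fin n))
    (U : Matrix (Fin p) (Fin r) ℂ) (V : Matrix (Fin q) (Fin r) ℂ) :
    (Matrix (Fin r) (Fin r) ℂ × (Fin n → ℂ)) →ₗ[ℂ] (Matrix (Fin r) (Fin r) ℂ × (Fin n → ℂ)) where
  toFun P := (Uᴴ * (U * P.1 * Vᴴ - hankel p q n hn P.2) * V,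
    fun a => projOmega n Ω P.2 a
      - β * hankelAdj p q n (U * P.1 * Vᴴ - hankel p q n hn P.2) a + α * P.2 a)
  map_add' P Q := by
    have e : U * (P + Q).1 * Vᴴ - hankel p q n hn (P + Q).2
      = (U * P.1 * Vᴴ - hankel p q n hn P.2) + (U * Q.1 * Vᴴ - hankel p q n hn Q.2) := by
      rw [Prod.fst_add, Prod.snd_add, hankel_add, Matrix.mul_add, Matrix.add_mul]
      abel
    rw [e, hankelAdj_add, Matrix.mul_add, Matrix.add_mul]
    refine Prod.ext rfl ?_
    ext a
    simp only [projOmega, Prod.snd_add, Pi.add_apply]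
    split_ifs <;> ring
  map_smul' c P := by
    have e : U * (c • P).1 * Vᴴ - hankel p q n hn (c • P).2
      = c • (U * P.1 * Vᴴ - hankel p q n hn P.2) := by
      rw [Prod.smul_fst, Prod.smul_snd, hankel_smul, Matrix.mul_smul, Matrix.smul_mul, smul_sub]
    rw [e, hankelAdj_smul, Matrix.mul_smul, Matrix.smul_mul]
    refine Prod.ext rfl ?_
    ext a
    simp only [projOmega, Prod.smul_snd, Pi.smul_apply, smul_eq_mul, RingHom.id_apply]
    split_ifs <;> ring

lemma exists_stationary (p q n r : ℕ) (hn : p + q = n + 1)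
    (α β : ℝ) (hα : 0 < α) (hβ : 0 < β) (Ω : Finset (Fin n)) (s : Fin n → ℂ)
    (U : Matrix (Fin p) (Fin r) ℂ) (V : Matrix (Fin q) (Fin r) ℂ)
    (hU : Uᴴ * U = 1) (hV : Vᴴ * V = 1) :
    ∃ (S : Matrix (Fin r) (Fin r) ℂ) (x : Fin n → ℂ),
      Uᴴ * (U * S * Vᴴ - hankel p q n hn x) * V = 0 ∧
      ∀ a, projOmega n Ω x a - β * hankelAdj p q n (U * S * Vᴴ - hankel p q n hn x) a
      + α * x a = projOmega n Ω s a := by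
  have inj : Function.Injective (gradMap p q n r hn α β Ω U V) := by
    rw [← LinearMap.ker_eq_bot, LinearMap.ker_eq_bot']
    rintro ⟨D, d⟩ h
    have h1 := congrArg Prod.fst h
    have h2 := congrArg Prod.snd h
    have key := expansion p q n r hn α β Ω 0 U V D d h1
      (fun a => by
        have := congrFun h2 a
        simpa [gradMap, projOmega] using this) (-D) (-d)
    have z : Gfun p q n r hn α β Ω 0 U V (D + -D) (d + -d) = 0 := by
      have : hankel p q n hn 0 = 0 := rfl
      simp [Gfun, projOmega, this]
    have p2 := Gfun_zero_nonneg p q n r hn α β hα hβ Ω 0 U V (-D) (-d)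
    obtain ⟨a, b⟩ := Gfun_zero_eq p q n r hn α β hα hβ Ω U V hU hV D d (by linarith)
    rw [a, b]
    rfl
  obtain ⟨⟨S, x⟩, h⟩ := (LinearMap.injective_iff_surjective.mp inj) (0, projOmega n Ω s)
  exact ⟨S, x, congrArg Prod.fst h, fun a => congrFun (congrArg Prod.snd h) a⟩

lemma Lop_split (p q n : ℕ) (α β : ℝ) (Ω : Finset (Fin n)) (y z : Fin n → ℂ) :
    Lop p q n α β Ω (y + β • z) = Lop p q n α β Ω y + (β : ℂ) • Lop p q n α β Ω z := by
  ext a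
  simp only [Lop, Pi.add_apply, Pi.smul_apply, Complex.real_smul, smul_eq_mul]
  ring

lemma stationary_iff (p q n r : ℕ) (hn : p + q = n + 1)
    (α β : ℝ) (hα : 0 < α) (hβ : 0 < β) (Ω : Finset (Fin n)) (s : Fin n → ℂ)
    (U : Matrix (Fin p) (Fin r) ℂ) (V : Matrix (Fin q) (Fin r) ℂ)
    (hU : Uᴴ * U = 1) (hV : Vᴴ * V = 1)
    (S : Matrix (Fin r) (Fin r) ℂ) (x : Fin n → ℂ) :
    (Uᴴ * (U * S * Vᴴ - hankel p q n hn x) * V = 0 ∧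
      ∀ a, projOmega n Ω x a - β * hankelAdj p q n (U * S * Vᴴ - hankel p q n hn x) a
      + α * x a = projOmega n Ω s a) ↔
    (x = Lop p q n α β Ω
              (projOmega n Ω s + β • hankelAdj p q n (U * S * V.conjTranspose)) ∧
           S - β • (U.conjTranspose
                * hankel p q n hn (Lop p q n α β Ω
                    (hankelAdj p q n (U * S * V.conjTranspose)))
                * V)
             = U.conjTranspose * hankel p q n hn (Lop p q n α β Ω (projOmega n Ω s)) * V) := by
  have hc : ∀ a : Fin n,
      ((α : ℂ) + (if a ∈ Ω then 1 else 0) + (β : ℂ) * (w p q (a : ℕ) : ℂ)) ≠ 0 := by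
    intro a
    have : (0 : ℝ) < α + (if a ∈ Ω then 1 else 0) + β * (w p q (a : ℕ) : ℝ) := by
      have : (0 : ℝ) ≤ (if a ∈ Ω then 1 else 0) := by split_ifs <;> norm_num
      positivity
    have h := Complex.ofReal_ne_zero.mpr this.ne'
    intro h0
    apply h
    rw [← h0]
    push_cast
    split_ifs <;> simp
  have i2 : (∀ a, projOmega n Ω x a - β * hankelAdj p q n (U * S * Vᴴ - hankel p q n hn x) a
      + α * x a = projOmega n Ω s a) ↔ x = Lop p q n α β Ω
              (projOmega n Ω s + β • hankelAdj p q n (U * S * V.conjTranspose)) := by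
    rw [funext_iff]
    refine forall_congr' fun a => ?_
    rw [hankelAdj_sub, Pi.sub_apply, hankelAdj_hankel]
    unfold Lop
    rw [eq_div_iff (hc a)]
    simp only [projOmega, Pi.add_apply, Pi.smul_apply, Complex.real_smul]
    split_ifs
    · constructor <;> intro h <;> linear_combination h
    · constructor <;> intro h <;> linear_combination h
  rw [i2, and_comm]
  refine and_congr_right fun hx => ?_
  have e : Uᴴ * hankel p q n hn x * V
      = Uᴴ * hankel p q n hn (Lop p q n α β Ω (projOmega n Ω s)) * V
        + β • (Uᴴ * hankel p q n hn (Lop p q n α β Ω (hankelAdj p q n (U * S * Vᴴ))) * V) := by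
    conv_lhs => rw [hx]
    rw [Lop_split, hankel_add, hankel_smul, Matrix.mul_add, Matrix.add_mul, Matrix.mul_smul,
      Matrix.smul_mul]
    rfl
  rw [Matrix.mul_sub, Matrix.sub_mul, uv_cancel U V hU hV, e, sub_eq_zero, sub_eq_iff_eq_add]

/-- `G(Σ,x)` has a unique global minimizer `(Σ*, x†)`, and the
global minimizers are exactly characterized by the equations
`x = 𝓛(𝓟_Ω s + β𝓗*(UΣVᴴ))` and
`Σ − β Uᴴ(𝓗(𝓛(𝓗*(UΣVᴴ))))V = Uᴴ(𝓗(𝓛(𝓟_Ω s)))V`. -/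
theorem Gfun_unique_minimizer_characterization
    (p q n r : ℕ) (hp : 0 < p) (hq : 0 < q) (hn : p + q = n + 1)
    (hr : r ≤ min p q)
    (α β : ℝ) (hα : 0 < α) (hβ : 0 < β) (Ω : Finset (Fin n)) (s : Fin n → ℂ)
    (U : Matrix (Fin p) (Fin r) ℂ) (V : Matrix (Fin q) (Fin r) ℂ)
    (hU : U.conjTranspose * U = 1) (hV : V.conjTranspose * V = 1) :
    (∃! P : Matrix (Fin r) (Fin r) ℂ × (Fin n → ℂ),
        ∀ Q : Matrix (Fin r) (Fin r) ℂ × (Fin n → ℂ),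
          Gfun p q n r hn α β Ω s U V P.1 P.2 ≤ Gfun p q n r hn α β Ω s U V Q.1 Q.2) ∧
    (∀ (S : Matrix (Fin r) (Fin r) ℂ) (x : Fin n → ℂ),
        (∀ (S' : Matrix (Fin r) (Fin r) ℂ) (x' : Fin n → ℂ),
            Gfun p q n r hn α β Ω s U V S x ≤ Gfun p q n r hn α β Ω s U V S' x')
        ↔ (x = Lop p q n α β Ω
              (projOmega n Ω s + β • hankelAdj p q n (U * S * V.conjTranspose)) ∧
           S - β • (U.conjTranspose
                * hankel p q n hn (Lop p q n α β Ω
                    (hankelAdj p q n (U * S * V.conjTranspose)))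
                * V)
             = U.conjTranspose * hankel p q n hn (Lop p q n α β Ω (projOmega n Ω s)) * V)) := by
  obtain ⟨S₀, x₀, h1, h2⟩ := exists_stationary p q n r hn α β hα hβ Ω s U V hU hV
  have ex : ∀ (S : Matrix (Fin r) (Fin r) ℂ) (x : Fin n → ℂ),
      (Uᴴ * (U * S * Vᴴ - hankel p q n hn x) * V = 0 ∧
      ∀ a, projOmega n Ω x a - β * hankelAdj p q n (U * S * Vᴴ - hankel p q n hn x) a
      + α * x a = projOmega n Ω s a) → ∀ S' x', Gfun p q n r hn α β Ω s U V S' x'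
        = Gfun p q n r hn α β Ω s U V S x
          + Gfun p q n r hn α β Ω 0 U V (S' - S) (x' - x) := by
    intro S x h S' x'
    have := expansion p q n r hn α β Ω s U V S x h.1 h.2 (S' - S) (x' - x)
    simpa using this
  have mn : ∀ (S : Matrix (Fin r) (Fin r) ℂ) (x : Fin n → ℂ),
      (Uᴴ * (U * S * Vᴴ - hankel p q n hn x) * V = 0 ∧
      ∀ a, projOmega n Ω x a - β * hankelAdj p q n (U * S * Vᴴ - hankel p q n hn x) a
      + α * x a = projOmega n Ω s a) → ∀ S' x', Gfun p q n r hn α β Ω s U V S x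
        ≤ Gfun p q n r hn α β Ω s U V S' x' := by
    intro S x h S' x'
    have := ex S x h S' x'
    have := Gfun_zero_nonneg p q n r hn α β hα hβ Ω 0 U V (S' - S) (x' - x)
    linarith
  have uq : ∀ (S : Matrix (Fin r) (Fin r) ℂ) (x : Fin n → ℂ),
      (∀ S' x', Gfun p q n r hn α β Ω s U V S x
        ≤ Gfun p q n r hn α β Ω s U V S' x') → S = S₀ ∧ x = x₀ := by
    intro S x h
    have a1 := ex S₀ x₀ ⟨h1, h2⟩ S x
    have a2 := h S₀ x₀
    obtain ⟨a, b⟩ := Gfun_zero_eq p q n r hn α β hα hβ Ω U V hU hV (S - S₀) (x - x₀)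
      (by linarith)
    exact ⟨sub_eq_zero.mp a, sub_eq_zero.mp b⟩
  refine ⟨⟨(S₀, x₀), fun Q => mn S₀ x₀ ⟨h1, h2⟩ Q.1 Q.2, ?_⟩, ?_⟩
  · rintro ⟨S, x⟩ h
    obtain ⟨a, b⟩ := uq S x fun S' x' => h (S', x')
    exact Prod.ext a b
  · intro S x
    rw [← stationary_iff p q n r hn α β hα hβ Ω s U V hU hV S x]
    constructor
    · intro h
      obtain ⟨rfl, rfl⟩ := uq S x h
      exact ⟨h1, h2⟩
    · exact mn S x

end LPPG
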